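/- Let A be a q×q complex matrix, let w₀ > 0 and b > 0, set w_k := w₀ + kb, and set F_{i,j} := ∏_{k=i}^{j−1}(I + w_k⁻¹A). Then for every eigenvalue λ of A there is a constant C (depending on A, λ, b, w₀ but not on i, j) such that for all integers 1 ≤ i ≤ j: ‖P_λ F_{i,j}‖ ≤ C (j/i)^{Re λ / b} (1 + log(j/i))^{ν_λ}. -/

import Mathlib

open MeasureTheory Matrix Filter

/-- The operator norm of a complex q×q matrix, with respect to the Euclidean norm. -/
noncomputable def opNorm {q : ℕ} (M : Matrix (Fin q) (Fin q) ℂ) : ℝ :=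
  ‖Matrix.toEuclideanCLM (𝕜 := ℂ) M‖

/-- The matrix products F_{i,j} := ∏_{k=i}^{j−1} (I + w_k⁻¹ A) (empty product = I).
The factors commute, so the order of multiplication is immaterial; here the factors
are multiplied with increasing k from left to right. -/
noncomputable def prodF {q : ℕ} (A : Matrix (Fin q) (Fin q) ℂ) (w : ℕ → ℝ) (i j : ℕ) :
    Matrix (Fin q) (Fin q) ℂ :=
  ((List.range' i (j - i)).map fun k => (1 : Matrix (Fin q) (Fin q) ℂ) + (w k)⁻¹ • A).prod

/-- `P` is the spectral projection of `A` for the eigenvalue `lam`: it is the identity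
on the generalized eigenspace E_lam = ker((A − lam I)^q) and vanishes on the generalized
eigenspace E_mu = ker((A − mu I)^q) of every other eigenvalue `mu`. Since ℂ^q is the
direct sum of the generalized eigenspaces, these conditions determine `P` uniquely. -/
def IsSpectralProj {q : ℕ} (A : Matrix (Fin q) (Fin q) ℂ) (lam : ℂ)
    (P : Matrix (Fin q) (Fin q) ℂ) : Prop :=
  (∀ v : Fin q → ℂ, ((A - lam • 1) ^ q).mulVec v = 0 → P.mulVec v = v) ∧
  ∀ mu : ℂ, mu ≠ lam → ∀ v : Fin q → ℂ, ((A - mu • 1) ^ q).mulVec v = 0 → P.mulVec v = 0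

/-- `ν` is the nilpotency index ν_lam of N_lam := (A − lam I) P_lam, i.e. the unique
integer ν ≥ 0 with N_lam^(ν+1) = 0 and (ν = 0 or N_lam^ν ≠ 0). -/
def NilIndexOf {q : ℕ} (A : Matrix (Fin q) (Fin q) ℂ) (lam : ℂ)
    (P : Matrix (Fin q) (Fin q) ℂ) (ν : ℕ) : Prop :=
  ((A - lam • 1) * P) ^ (ν + 1) = 0 ∧ (ν = 0 ∨ ((A - lam • 1) * P) ^ ν ≠ 0)

/-!
Put `s = ∑_{i ≤ k < j} t k`. The commuting factors `exp (-(t k • x)) * (1 + t k • x)` of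
`exp (-s • x) * ∏_{i ≤ k < j} (1 + t k • x)` are `1 + O(‖t k‖ ^ 2)`, so this product is bounded
uniformly in `i` and `j` when the steps are square summable, and only `p * exp (s • x)` has to be
estimated. If `p * (x - lam • 1) ^ (ν + 1) = 0`, it is `exp (s * lam)` times a polynomial of degree
at most `ν` in `s`. Finally, steps that differ from `a / k` by a summable sequence have
`s = a * log (j / i) + O(1)`, by comparison of harmonic sums with the logarithm.
-/

section StepProduct

variable {R S : Type*} [CommSemiring R] [Semiring S] [Algebra R S]

/-- The product `∏_{i ≤ k < j} (1 + t_k x)` generalizing the matrices `F_{i,j}` to an element `x` of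
an arbitrary algebra and arbitrary step sizes `t_k`. As for `prodF`, the factors are multiplied with
`k` increasing from left to right, although they commute. -/
def stepProd (x : S) (t : ℕ → R) (i j : ℕ) : S :=
  ((List.range' i (j - i)).map fun k => 1 + t k • x).prod

theorem stepProd_self (x : S) (t : ℕ → R) (i : ℕ) : stepProd x t i i = 1 := by
  simp [stepProd]

theorem stepProd_succ (x : S) (t : ℕ → R) {i j : ℕ} (hij : i ≤ j) :
    stepProd x t i (j + 1) = stepProd x t i j * (1 + t j • x) := by
  simp [stepProd, Nat.sub_add_comm hij, List.range'_concat, Nat.add_sub_cancel' hij]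

theorem commute_stepProd (x : S) (t : ℕ → R) (i j : ℕ) : Commute x (stepProd x t i j) := by
  refine Commute.list_prod_right _ _ fun y hy => ?_
  obtain ⟨k, -, rfl⟩ := List.mem_map.1 hy
  exact (Commute.one_right x).add_right ((Commute.refl x).smul_right (t k))

end StepProduct

section Exponential

open NormedSpace Asymptotics
open scoped Topology

theorem isBigO_exp_neg_mul_one_add_sub_one {𝔸 : Type*} [NormedRing 𝔸] [NormedAlgebra ℚ 𝔸]
    [CompleteSpace 𝔸] :
    (fun y : 𝔸 => exp (-y) * (1 + y) - 1) =O[𝓝 0] fun y => ‖y‖ ^ 2 := by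
  have taylor : (fun y : 𝔸 => exp y - (1 + y)) =O[𝓝 0] fun y => ‖y‖ ^ 2 := by
    simpa [FormalMultilinearSeries.partialSum, Finset.sum_range_succ, expSeries_apply_eq] using
      (exp_hasFPowerSeriesAt_zero (𝕂 := ℚ) (𝔸 := 𝔸)).isBigO_sub_partialSum_pow 2
  have taylor_neg : (fun y : 𝔸 => exp (-y) - (1 - y)) =O[𝓝 0] fun y => ‖y‖ ^ 2 := by
    simpa [Function.comp_def, sub_eq_add_neg] using
      taylor.comp_tendsto (continuous_neg.tendsto' (0 : 𝔸) 0 neg_zero)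
  have bounded : (fun y : 𝔸 => 1 + y) =O[𝓝 0] fun _ => (1 : ℝ) :=
    (continuous_const.add continuous_id).continuousAt.isBigO_one ℝ
  have square : (fun y : 𝔸 => y * y) =O[𝓝 0] fun y => ‖y‖ ^ 2 :=
    isBigO_of_le _ fun y => by simpa [sq] using norm_mul_le y y
  have product : (fun y : 𝔸 => (exp (-y) - (1 - y)) * (1 + y)) =O[𝓝 0] fun y => ‖y‖ ^ 2 := by
    simpa using taylor_neg.mul bounded
  refine (product.sub square).congr_left fun y => ?_
  noncomm_ring

variable {𝕜 𝔸 : Type*} [RCLike 𝕜] [NormedRing 𝔸] [NormedAlgebra 𝕜 𝔸] [CompleteSpace 𝔸]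

theorem exp_add_smul (x : 𝔸) (s u : 𝕜) : exp ((s + u) • x) = exp (s • x) * exp (u • x) := by
  let _ : NormedAlgebra ℚ 𝔸 := NormedAlgebra.restrictScalars ℚ 𝕜 𝔸
  rw [add_smul, NormedSpace.exp_add_of_commute (((Commute.refl x).smul_left s).smul_right u)]

theorem exp_smul_mul_exp_neg_smul (x : 𝔸) (s : 𝕜) : exp (s • x) * exp (-s • x) = 1 := by
  rw [← exp_add_smul, add_neg_cancel, zero_smul, exp_zero]

theorem norm_exp_neg_sum_mul_stepProd_le (x : 𝔸) (t : ℕ → 𝕜) {i j : ℕ} (hij : i ≤ j) :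
    ‖exp (-(∑ k ∈ Finset.Ico i j, t k) • x) * stepProd x t i j‖ ≤ ‖(1 : 𝔸)‖ *
      Real.exp (∑ k ∈ Finset.Ico i j, ‖exp (-(t k • x)) * (1 + t k • x) - 1‖) := by
  induction j, hij using Nat.le_induction with
  | base => simp [stepProd_self]
  | succ j hij ih =>
    rw [Finset.sum_Ico_succ_top hij, Finset.sum_Ico_succ_top hij, stepProd_succ x t hij]
    set s := ∑ k ∈ Finset.Ico i j, t k
    set Q := exp (-s • x) * stepProd x t i j with hQ
    set R := exp (-(t j • x)) * (1 + t j • x) - 1 with hR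
    have hcomm : Commute (exp (-(t j • x))) (stepProd x t i j) :=
      ((commute_stepProd x t i j).smul_left (t j)).neg_left.exp_left
    have hfactor : exp (-(s + t j) • x) * (stepProd x t i j * (1 + t j • x)) = Q + Q * R := by
      rw [neg_add, exp_add_smul, neg_smul (t j), hQ, hR, mul_sub, mul_one, add_sub_cancel,
        mul_assoc, ← mul_assoc _ (stepProd x t i j), hcomm.eq]
      simp only [mul_assoc]
    calc ‖exp (-(s + t j) • x) * (stepProd x t i j * (1 + t j • x))‖
        ≤ ‖Q‖ + ‖Q‖ * ‖R‖ := by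
          rw [hfactor]
          exact (norm_add_le _ _).trans (by gcongr; exact norm_mul_le _ _)
      _ = ‖Q‖ * (‖R‖ + 1) := by ring
      _ ≤ ‖(1 : 𝔸)‖ * Real.exp (∑ k ∈ Finset.Ico i j,
            ‖exp (-(t k • x)) * (1 + t k • x) - 1‖) * Real.exp ‖R‖ := by
          gcongr
          exact Real.add_one_le_exp _
      _ = _ := by rw [mul_assoc, ← Real.exp_add]

theorem exists_norm_exp_neg_sum_mul_stepProd_le (x : 𝔸) {t : ℕ → 𝕜}
    (ht : Summable fun k => ‖t k‖ ^ 2) :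
    ∃ M : ℝ, ∀ i j : ℕ, i ≤ j →
      ‖exp (-(∑ k ∈ Finset.Ico i j, t k) • x) * stepProd x t i j‖ ≤ M := by
  let _ : NormedAlgebra ℚ 𝔸 := NormedAlgebra.restrictScalars ℚ 𝕜 𝔸
  have ht0 : Tendsto (fun k => t k • x) atTop (𝓝 0) := by
    have hnorm : Tendsto (fun k => ‖t k‖) atTop (𝓝 0) := by
      simpa using ht.tendsto_atTop_zero.sqrt
    simpa using (tendsto_zero_iff_norm_tendsto_zero.2 hnorm).smul_const x
  have hsummable : Summable fun k => ‖exp (-(t k • x)) * (1 + t k • x) - 1‖ :=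
    summable_of_isBigO_nat (ht.mul_right (‖x‖ ^ 2)) <| by
      simpa only [Function.comp_def, norm_smul, mul_pow] using
        isBigO_exp_neg_mul_one_add_sub_one.norm_left.comp_tendsto ht0
  refine ⟨‖(1 : 𝔸)‖ * Real.exp (∑' k, ‖exp (-(t k • x)) * (1 + t k • x) - 1‖),
    fun i j hij => (norm_exp_neg_sum_mul_stepProd_le x t hij).trans ?_⟩
  gcongr
  exact hsummable.sum_le_tsum _ fun k _ => norm_nonneg _

theorem mul_exp_smul_eq_sum {y p : 𝔸} {ν : ℕ} (hp : p * y ^ (ν + 1) = 0) (s : 𝕜) :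
    p * exp (s • y) = ∑ m ∈ Finset.range (ν + 1), ((m.factorial : 𝕜)⁻¹ * s ^ m) • (p * y ^ m) := by
  have hseries := (exp_series_hasSum_exp' (𝕂 := 𝕜) (s • y)).mul_left p
  simp only [smul_pow, mul_smul_comm, smul_smul] at hseries
  refine hseries.unique (hasSum_sum_of_ne_finset_zero fun m hm => ?_)
  obtain ⟨d, rfl⟩ := Nat.exists_eq_add_of_le (not_lt.1 (Finset.mem_range.not.1 hm))
  rw [pow_add y, ← mul_assoc p, hp, zero_mul, smul_zero]

theorem norm_mul_exp_smul_le {y p : 𝔸} {ν : ℕ} (hp : p * y ^ (ν + 1) = 0) (s : 𝕜) :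
    ‖p * exp (s • y)‖ ≤ (∑ m ∈ Finset.range (ν + 1), ‖p * y ^ m‖) * (1 + ‖s‖) ^ ν := by
  rw [mul_exp_smul_eq_sum hp, Finset.sum_mul]
  refine norm_sum_le_of_le _ fun m hm => ?_
  rw [norm_smul, mul_comm]
  gcongr
  calc ‖(m.factorial : 𝕜)⁻¹ * s ^ m‖ = (m.factorial : ℝ)⁻¹ * ‖s‖ ^ m := by simp
    _ ≤ 1 * (1 + ‖s‖) ^ m := by
        gcongr
        · exact inv_le_one_of_one_le₀ (mod_cast m.factorial_pos)
        · linarith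
    _ ≤ (1 + ‖s‖) ^ ν := by
        rw [one_mul]
        exact pow_le_pow_right₀ (by linarith [norm_nonneg s]) (Finset.mem_range_succ_iff.1 hm)

end Exponential

section SpectralGrowth

open NormedSpace

variable {𝔸 : Type*} [NormedRing 𝔸] [NormedAlgebra ℂ 𝔸] [CompleteSpace 𝔸]

theorem exp_smul_eq_smul_exp_smul_sub (x : 𝔸) (lam s : ℂ) :
    exp (s • x) = Complex.exp (s * lam) • exp (s • (x - lam • 1)) := by
  let _ : NormedAlgebra ℚ 𝔸 := NormedAlgebra.restrictScalars ℚ ℂ 𝔸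
  have hsplit : s • x = algebraMap ℂ 𝔸 (s * lam) + s • (x - lam • 1) := by
    rw [Algebra.algebraMap_eq_smul_one, smul_sub, smul_smul, add_sub_cancel]
  rw [hsplit, NormedSpace.exp_add_of_commute (Algebra.commutes _ _), ← algebraMap_exp_comm,
    ← Complex.exp_eq_exp_ℂ, ← Algebra.smul_def]

theorem exists_norm_mul_exp_smul_le {x p : 𝔸} {lam : ℂ} {ν : ℕ}
    (hp : p * (x - lam • 1) ^ (ν + 1) = 0) :
    ∃ K : ℝ, 0 ≤ K ∧ ∀ s : ℂ, ‖p * exp (s • x)‖ ≤ K * Real.exp (s * lam).re * (1 + ‖s‖) ^ ν := by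
  refine ⟨∑ m ∈ Finset.range (ν + 1), ‖p * (x - lam • 1) ^ m‖, by positivity, fun s => ?_⟩
  rw [exp_smul_eq_smul_exp_smul_sub x lam, mul_smul_comm, norm_smul, Complex.norm_exp,
    mul_comm _ (Real.exp _), mul_assoc]
  gcongr
  exact norm_mul_exp_smul_le hp s

theorem exists_norm_mul_exp_smul_le_rpow_mul_log {x p : 𝔸} {lam : ℂ} {ν : ℕ}
    (hp : p * (x - lam • 1) ^ (ν + 1) = 0) (a : ℂ) (D : ℝ) :
    ∃ K : ℝ, ∀ (s : ℂ) (r : ℝ), 1 ≤ r → ‖s - a * Real.log r‖ ≤ D →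
      ‖p * exp (s • x)‖ ≤ K * r ^ (a * lam).re * (1 + Real.log r) ^ ν := by
  obtain ⟨K, hK, hbound⟩ := exists_norm_mul_exp_smul_le hp
  refine ⟨K * Real.exp (D * ‖lam‖) * (1 + ‖a‖ + D) ^ ν, fun s r hr hs => ?_⟩
  have hlog : 0 ≤ Real.log r := Real.log_nonneg hr
  have hD : 0 ≤ D := (norm_nonneg _).trans hs
  have hre : (s * lam).re ≤ D * ‖lam‖ + Real.log r * (a * lam).re := by
    have hsplit : s * lam = (s - a * Real.log r) * lam + Real.log r * (a * lam) := by ring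
    rw [hsplit, Complex.add_re, Complex.re_ofReal_mul]
    gcongr
    exact (Complex.re_le_norm _).trans (by rw [norm_mul]; gcongr)
  have hnorm : 1 + ‖s‖ ≤ (1 + ‖a‖ + D) * (1 + Real.log r) := by
    have htri : ‖s‖ ≤ D + ‖a‖ * Real.log r := calc
      ‖s‖ ≤ ‖s - a * Real.log r‖ + ‖a * Real.log r‖ := by
        simpa using norm_add_le (s - a * Real.log r) (a * Real.log r)
      _ ≤ D + ‖a‖ * Real.log r := by
        rw [norm_mul, Complex.norm_of_nonneg hlog]
        gcongr
    nlinarith [mul_nonneg hD hlog, norm_nonneg a]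
  calc ‖p * exp (s • x)‖ ≤ K * Real.exp (s * lam).re * (1 + ‖s‖) ^ ν := hbound s
    _ ≤ K * Real.exp (D * ‖lam‖ + Real.log r * (a * lam).re) *
          ((1 + ‖a‖ + D) * (1 + Real.log r)) ^ ν := by gcongr
    _ = _ := by
        rw [Real.exp_add, mul_pow, Real.rpow_def_of_pos (by linarith)]
        ring

end SpectralGrowth

section StepSizes

open Asymptotics

theorem abs_sum_Ico_inv_sub_log_div_le_one {i j : ℕ} (hi : 1 ≤ i) (hij : i ≤ j) :
    |∑ k ∈ Finset.Ico i j, (k : ℝ)⁻¹ - Real.log (j / i)| ≤ 1 := by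
  obtain ⟨m, rfl⟩ := Nat.exists_eq_add_of_le' hi
  obtain ⟨n, rfl⟩ := Nat.exists_eq_add_of_le' (hi.trans hij)
  have hmn : m ≤ n := Nat.le_of_add_le_add_right hij
  have hsum : ∑ k ∈ Finset.Ico (m + 1) (n + 1), (k : ℝ)⁻¹ - Real.log (↑(n + 1) / ↑(m + 1)) =
      Real.eulerMascheroniSeq n - Real.eulerMascheroniSeq m := by
    rw [Real.log_div (by positivity) (by positivity),
      ← Finset.sum_Ico_add' (fun k : ℕ => (k : ℝ)⁻¹), Finset.sum_Ico_eq_sub _ hmn]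
    simp only [Real.eulerMascheroniSeq, harmonic]
    push_cast
    ring
  have hmono := Real.strictMono_eulerMascheroniSeq.monotone hmn
  have hnonneg := Real.strictMono_eulerMascheroniSeq.monotone m.zero_le
  have hlt := (Real.eulerMascheroniSeq_lt_eulerMascheroniConstant n).trans
    Real.eulerMascheroniConstant_lt_two_thirds
  rw [Real.eulerMascheroniSeq_zero] at hnonneg
  rw [hsum, abs_of_nonneg (sub_nonneg.2 hmono)]
  linarith

theorem exists_norm_sum_Ico_sub_mul_log_le {t : ℕ → ℂ} {a : ℂ}
    (ht : Summable fun k : ℕ => t k - a / k) :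
    ∃ D : ℝ, ∀ i j : ℕ, 1 ≤ i → i ≤ j →
      ‖∑ k ∈ Finset.Ico i j, t k - a * Real.log (j / i)‖ ≤ D := by
  refine ⟨∑' k, ‖t k - a / k‖ + ‖a‖ * 1, fun i j hi hij => ?_⟩
  have hsplit : ∑ k ∈ Finset.Ico i j, t k - a * Real.log (j / i) =
      ∑ k ∈ Finset.Ico i j, (t k - a / k) +
        a * ↑(∑ k ∈ Finset.Ico i j, (k : ℝ)⁻¹ - Real.log (j / i)) := by
    push_cast
    simp only [Finset.sum_sub_distrib, mul_sub, Finset.mul_sum, div_eq_mul_inv]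
    ring
  rw [hsplit]
  refine (norm_add_le _ _).trans (add_le_add ?_ ?_)
  · exact (norm_sum_le _ _).trans (ht.norm.sum_le_tsum _ fun k _ => norm_nonneg _)
  · rw [norm_mul, Complex.norm_real, Real.norm_eq_abs]
    gcongr
    exact abs_sum_Ico_inv_sub_log_div_le_one hi hij

theorem summable_norm_sq_of_summable_sub_div {𝕜 : Type*} [RCLike 𝕜] {t : ℕ → 𝕜} {a : 𝕜}
    (ht : Summable fun k : ℕ => t k - a / k) : Summable fun k => ‖t k‖ ^ 2 := by
  have hdiff : Memℓp (fun k : ℕ => t k - a / k) 2 :=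
    (memℓp_gen (by simpa using ht.norm) : Memℓp _ 1).of_exponent_ge one_le_two
  have hdiv : Memℓp (fun k : ℕ => a / k) 2 := memℓp_gen <| by
    simpa [div_eq_mul_inv, mul_pow] using
      (Real.summable_nat_pow_inv.2 one_lt_two).mul_left (‖a‖ ^ 2)
  simpa using (hdiff.add hdiv).summable (by norm_num)

theorem summable_inv_add_mul_sub_inv_div {𝕜 : Type*} [RCLike 𝕜] (w₀ : 𝕜) {b : 𝕜} (hb : b ≠ 0) :
    Summable fun k : ℕ => (w₀ + k * b)⁻¹ - b⁻¹ / k := by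
  have hlin : (fun k : ℕ => w₀ + k * b) =Θ[atTop] fun k : ℕ => (k : 𝕜) := by
    have hnat : Tendsto (fun k : ℕ => ‖(k : 𝕜)‖) atTop atTop := by
      simpa using tendsto_natCast_atTop_atTop (R := ℝ)
    simpa only [mul_comm b] using! (isLittleO_const_left.2 (.inr hnat)).add_isTheta
      ((isTheta_refl (fun k : ℕ => (k : 𝕜)) atTop).const_mul_left hb)
  have hinv : (fun k : ℕ => (k : 𝕜)⁻¹ * (w₀ + k * b)⁻¹) =O[atTop] fun k : ℕ => ((k : ℝ) ^ 2)⁻¹ := by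
    simpa [sq, ← isBigO_norm_right (g' := fun k : ℕ => (k : 𝕜)⁻¹ * (k : 𝕜)⁻¹)] using
      (isBigO_refl (fun k : ℕ => (k : 𝕜)⁻¹) atTop).mul hlin.inv.isBigO
  refine summable_of_isBigO_nat (Real.summable_nat_pow_inv.2 one_lt_two)
    ((hinv.const_mul_left (-(w₀ * b⁻¹))).congr' ?_ .rfl)
  filter_upwards [eventually_ne_atTop 0, hlin.eq_zero_iff] with k hk hzero
  have hk' : (k : 𝕜) ≠ 0 := mod_cast hk
  have hw : w₀ + b * k ≠ 0 := mul_comm b (k : 𝕜) ▸ hzero.not.2 hk'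
  field_simp
  ring

end StepSizes

section SpectralProjection

theorem eq_zero_of_mulVec_eq_zero_of_genEigenvector {K m n : Type*} [Field K] [IsAlgClosed K]
    [Fintype n] [DecidableEq n] (A : Matrix n n K) {M : Matrix m n K}
    (hM : ∀ (mu : K) (v : n → K), ((A - mu • 1) ^ Fintype.card n).mulVec v = 0 → M.mulVec v = 0) :
    M = 0 := by
  have htop : ⨆ mu : K, Module.End.maxGenEigenspace (Matrix.toLin' A) mu ≤
      LinearMap.ker (Matrix.toLin' M) := by
    refine iSup_le fun mu v hv => hM mu v ?_
    rw [Module.End.maxGenEigenspace_eq_genEigenspace_finrank, Module.End.mem_genEigenspace_nat,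
      LinearMap.mem_ker, Module.finrank_fintype_fun_eq_card] at hv
    rw [← Matrix.toLin'_apply, Matrix.toLin'_pow, map_sub, map_smul, Matrix.toLin'_one]
    exact hv
  rw [Module.End.iSup_maxGenEigenspace_eq_top, top_le_iff, LinearMap.ker_eq_top] at htop
  exact Matrix.toLin'.map_eq_zero_iff.1 htop

namespace IsSpectralProj

variable {q : ℕ} {A P : Matrix (Fin q) (Fin q) ℂ} {lam : ℂ}

theorem isIdempotentElem (hP : IsSpectralProj A lam P) : IsIdempotentElem P := by
  refine sub_eq_zero.1 (eq_zero_of_mulVec_eq_zero_of_genEigenvector A fun mu v hv => ?_)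
  rw [Fintype.card_fin] at hv
  rw [Matrix.sub_mulVec, ← Matrix.mulVec_mulVec, sub_eq_zero]
  obtain rfl | hmu := eq_or_ne mu lam
  · rw [hP.1 v hv, hP.1 v hv]
  · rw [hP.2 mu hmu v hv, Matrix.mulVec_zero]

theorem commute (hP : IsSpectralProj A lam P) : Commute P A := by
  refine sub_eq_zero.1 (eq_zero_of_mulVec_eq_zero_of_genEigenvector A fun mu v hv => ?_)
  rw [Fintype.card_fin] at hv
  have hcomm : Commute ((A - mu • 1) ^ q) A :=
    ((Commute.refl A).sub_left ((Commute.one_left A).smul_left mu)).pow_left q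
  have hAv : ((A - mu • 1) ^ q).mulVec (A.mulVec v) = 0 := by
    rw [Matrix.mulVec_mulVec, hcomm.eq, ← Matrix.mulVec_mulVec, hv, Matrix.mulVec_zero]
  rw [Matrix.sub_mulVec, ← Matrix.mulVec_mulVec, ← Matrix.mulVec_mulVec, sub_eq_zero]
  obtain rfl | hmu := eq_or_ne mu lam
  · rw [hP.1 v hv, hP.1 _ hAv]
  · rw [hP.2 mu hmu v hv, hP.2 mu hmu _ hAv, Matrix.mulVec_zero]

theorem mul_sub_smul_one_pow_succ (hP : IsSpectralProj A lam P) (m : ℕ) :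
    P * (A - lam • 1) ^ (m + 1) = ((A - lam • 1) * P) ^ (m + 1) := by
  have hcomm : Commute P (A - lam • 1) :=
    hP.commute.sub_right ((Commute.one_right P).smul_right lam)
  rw [hcomm.symm.mul_pow, hP.isIdempotentElem.pow_succ_eq, (hcomm.pow_right _).eq]

end IsSpectralProj

end SpectralProjection

section EuclideanOperatorNorm

open scoped Matrix.Norms.L2Operator

variable {q : ℕ}

theorem opNorm_eq_norm (M : Matrix (Fin q) (Fin q) ℂ) : opNorm M = ‖M‖ :=
  rfl

theorem prodF_eq_stepProd (A : Matrix (Fin q) (Fin q) ℂ) (w : ℕ → ℝ) (i j : ℕ) :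
    prodF A w i j = stepProd A (fun k => (w k : ℂ)⁻¹) i j := by
  simp only [prodF, stepProd, ← Complex.ofReal_inv, Complex.coe_smul]

end EuclideanOperatorNorm

theorem opNorm_spectralProj_prodF_le_general {𝔸 : Type*} [NormedRing 𝔸] [NormedAlgebra ℂ 𝔸]
    [CompleteSpace 𝔸] {x p : 𝔸} {lam : ℂ} {ν : ℕ} (hp : p * (x - lam • 1) ^ (ν + 1) = 0)
    {t : ℕ → ℂ} {a : ℂ} (ht : Summable fun k : ℕ => t k - a / k) :
    ∃ C : ℝ, ∀ i j : ℕ, 1 ≤ i → i ≤ j →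
      ‖p * stepProd x t i j‖ ≤
        C * ((j : ℝ) / i) ^ (a * lam).re * (1 + Real.log ((j : ℝ) / i)) ^ ν := by
  obtain ⟨D, hD⟩ := exists_norm_sum_Ico_sub_mul_log_le ht
  obtain ⟨K, hK⟩ := exists_norm_mul_exp_smul_le_rpow_mul_log hp a D
  obtain ⟨M, hM⟩ :=
    exists_norm_exp_neg_sum_mul_stepProd_le x (summable_norm_sq_of_summable_sub_div ht)
  refine ⟨K * M, fun i j hi hij => ?_⟩
  have hr : 1 ≤ (j : ℝ) / i := (one_le_div₀ (mod_cast hi)).2 (mod_cast hij)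
  set s := ∑ k ∈ Finset.Ico i j, t k
  have hpexp := hK s _ hr (by simpa using hD i j hi hij)
  calc ‖p * stepProd x t i j‖
      = ‖p * NormedSpace.exp (s • x) * (NormedSpace.exp (-s • x) * stepProd x t i j)‖ := by
        rw [mul_assoc, ← mul_assoc (NormedSpace.exp (s • x)), exp_smul_mul_exp_neg_smul, one_mul]
    _ ≤ ‖p * NormedSpace.exp (s • x)‖ * ‖NormedSpace.exp (-s • x) * stepProd x t i j‖ :=
        norm_mul_le _ _
    _ ≤ K * ((j : ℝ) / i) ^ (a * lam).re * (1 + Real.log ((j : ℝ) / i)) ^ ν * M :=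
        mul_le_mul hpexp (hM i j hij) (norm_nonneg _) ((norm_nonneg _).trans hpexp)
    _ = _ := by ring

/-- Let A be a q×q complex matrix, w₀ > 0, b > 0, w_k := w₀ + kb, and
F_{i,j} := ∏_{k=i}^{j−1}(I + w_k⁻¹A). Then for every eigenvalue λ of A there is a
constant C (depending on A, λ, b, w₀ but not on i, j) such that for all 1 ≤ i ≤ j:
‖P_λ F_{i,j}‖ ≤ C (j/i)^{Re λ / b} (1 + log(j/i))^{ν_λ}. -/
theorem opNorm_spectralProj_prodF_le (q : ℕ) (A : Matrix (Fin q) (Fin q) ℂ)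
    (w₀ b : ℝ) (hw₀ : 0 < w₀) (hb : 0 < b)
    (lam : ℂ) (hlam : lam ∈ spectrum ℂ A)
    (P : Matrix (Fin q) (Fin q) ℂ) (hP : IsSpectralProj A lam P)
    (ν : ℕ) (hν : NilIndexOf A lam P ν) :
    ∃ C : ℝ, ∀ i j : ℕ, 1 ≤ i → i ≤ j →
      opNorm (P * prodF A (fun k => w₀ + (k : ℝ) * b) i j)
        ≤ C * ((j : ℝ) / (i : ℝ)) ^ (lam.re / b) * (1 + Real.log ((j : ℝ) / (i : ℝ))) ^ ν := by
  open scoped Matrix.Norms.L2Operator in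
  simpa [opNorm_eq_norm, prodF_eq_stepProd, ← Complex.ofReal_inv, Complex.re_ofReal_mul,
    div_eq_inv_mul lam.re] using opNorm_spectralProj_prodF_le_general
      ((hP.mul_sub_smul_one_pow_succ ν).trans hν.1)
      (summable_inv_add_mul_sub_inv_div (w₀ : ℂ) (Complex.ofReal_ne_zero.2 hb.ne'))
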